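/- Let β be an irrational number that is not Liouville, i.e. there exists τ > 0 such that ‖qβ‖ ≥ q^{−τ} for all sufficiently large integers q, and let γ₂ be a real number. Define ψ(q) = 1/(q · log q · (log log q)²) for q ≥ 4 and let B = {q ≥ 4 : ‖qβ − γ₂‖ ≥ 1/log q}. Then ∑_{q ∈ B} ψ(q)/‖qβ − γ₂‖ = ∞. -/

import Mathlib

open Filter

/-- Distance from a real number to the nearest integer. -/
noncomputable def dnint (x : ℝ) : ℝ := |x - round x|

lemma aux_dnint_eq (k : ℤ) (y : ℝ) (h0 : 0 ≤ y) (h1 : y ≤ 1/2) : dnint (k + y) = y := by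
  unfold dnint
  have hle : |(k + y) - round ((k:ℝ) + y)| ≤ y := by
    have := round_le ((k:ℝ) + y) k
    have h2 : ((k:ℝ) + y) - k = y := by ring
    rw [h2, abs_of_nonneg h0] at this
    exact this
  refine le_antisymm hle ?_
  set R := round ((k:ℝ) + y) with hR
  by_cases hk : R = k
  · rw [hk]
    have h2 : ((k:ℝ) + y) - k = y := by ring
    rw [h2, abs_of_nonneg h0]
  · rcases lt_or_gt_of_ne hk with h | h
    · have : (R:ℝ) + 1 ≤ k := by exact_mod_cast h
      refine le_trans ?_ (le_abs_self _)
      linarith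
    · have : (k:ℝ) + 1 ≤ R := by exact_mod_cast h
      refine le_trans ?_ (neg_le_abs _)
      linarith

lemma aux_dnint_le (x : ℝ) (k : ℤ) : dnint x ≤ |x - k| := round_le x k

lemma aux_dnint_nonneg (x : ℝ) : 0 ≤ dnint x := abs_nonneg _

lemma aux_harm (a b : ℕ) (hab : a ≤ b) :
    Real.log (((b:ℝ) + 2) / ((a:ℝ) + 2)) ≤ ∑ i ∈ Finset.Ico a b, 1 / ((i:ℝ) + 2) := by
  induction b, hab using Nat.le_induction with
  | base =>
    rw [div_self (by positivity)]; simp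
  | succ b hb ih =>
    rw [Finset.sum_Ico_succ_top hb]
    have hb2 : (0:ℝ) < (b:ℝ) + 2 := by positivity
    have ha2 : (0:ℝ) < (a:ℝ) + 2 := by positivity
    have h1 : Real.log ((((b+1:ℕ):ℝ) + 2) / ((a:ℝ) + 2))
        = Real.log (((b:ℝ) + 2) / ((a:ℝ) + 2)) + Real.log (1 + 1 / ((b:ℝ) + 2)) := by
      rw [← Real.log_mul (by positivity) (by positivity)]
      congr 1
      push_cast
      field_simp
      ring
    have h2 : Real.log (1 + 1 / ((b:ℝ) + 2)) ≤ 1 / ((b:ℝ) + 2) := by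
      have := Real.log_le_sub_one_of_pos (show (0:ℝ) < 1 + 1 / ((b:ℝ) + 2) by positivity)
      linarith
    linarith

open Classical in
noncomputable def auxg (T x : ℝ) : ℝ :=
  if 1 / T ≤ dnint x then 1 / dnint x else 0

lemma auxg_nonneg (T x : ℝ) : 0 ≤ auxg T x := by
  unfold auxg
  split_ifs
  · exact div_nonneg zero_le_one (aux_dnint_nonneg _)
  · exact le_rfl

lemma aux_residue (p : ℚ) (t : ℤ) (i : ℕ) :
    ∃ j : ℕ, j < p.den ∧ ∃ k : ℤ, t + j * p.num = i + k * p.den := by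
  have hpos : (0:ℤ) < p.den := by exact_mod_cast p.den_pos
  have hcop : IsCoprime p.num (p.den : ℤ) := by
    rw [Int.isCoprime_iff_gcd_eq_one]
    exact p.reduced
  obtain ⟨u, v, huv⟩ := hcop
  refine ⟨(((i - t) * u) % p.den).toNat, ?_, ?_⟩
  · have h1 := Int.emod_lt_of_pos ((i - t) * u) hpos
    have h2 := Int.emod_nonneg ((i - t) * u) hpos.ne'
    omega
  · have h2 := Int.emod_nonneg ((i - t) * u) hpos.ne'
    rw [Int.toNat_of_nonneg h2]
    have h3 := Int.emod_add_mul_ediv ((i - t) * u) p.den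
    refine ⟨-(i - t) * v - ((i - t) * u / p.den) * p.num, ?_⟩
    have h4 : ((i - t) * u) % (p.den:ℤ) = (i - t) * u - p.den * ((i - t) * u / p.den) := by linarith
    rw [h4]
    linear_combination (i - t) * huv

lemma aux_key (β θ T : ℝ) (p : ℚ) (n : ℕ) (hp : |β - p| ≤ 1 / (((n:ℝ) + 1) * p.den))
    (hpn : p.den ≤ n) (hT : 4 ≤ T) (hr : 4 * T ≤ p.den) :
    p.den * Real.log (T / 4) ≤ ∑ j ∈ Finset.range p.den, auxg T (θ + j * β) := by
  set r := p.den with hrdef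
  have hrpos : (0:ℝ) < r := by linarith
  have hTpos : (0:ℝ) < T := by linarith
  set t := ⌊θ * r⌋ with ht
  set I0 := ⌈(r:ℝ)/T⌉₊ + 1 with hI0
  set J := r / 2 - 1 with hJ
  choose j hj k hk using aux_residue p t
  have hr16 : 16 ≤ r := by
    have : (16:ℝ) ≤ r := by linarith
    exact_mod_cast this
  have hinj : Set.InjOn j (Finset.Ico I0 J : Finset ℕ) := by
    intro a ha b hb hab
    simp only [Finset.coe_Ico, Set.mem_Ico] at ha hb
    have h1 := hk a
    have h2 := hk b
    rw [hab] at h1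
    have h3 : (a:ℤ) + k a * r = b + k b * r := by rw [← h1, ← h2]
    have h4 : ((a:ℤ) + k a * r) % r = (b + k b * r) % r := by rw [h3]
    rw [Int.add_mul_emod_self_right, Int.add_mul_emod_self_right] at h4
    have ha' : (a:ℤ) % r = a := Int.emod_eq_of_lt (by omega) (by omega)
    have hb' : (b:ℤ) % r = b := Int.emod_eq_of_lt (by omega) (by omega)
    omega
  have hterm : ∀ i ∈ Finset.Ico I0 J, (r:ℝ) * (1 / ((i:ℝ) + 2)) ≤ auxg T (θ + (j i) * β) := by
    intro i hi
    rw [Finset.mem_Ico] at hi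
    have hk' : (t:ℝ) + j i * p.num = i + k i * r := by exact_mod_cast hk i
    have hpr : (p:ℝ) * r = p.num := by
      have h := Rat.mul_den_eq_num p
      rw [hrdef]
      exact_mod_cast h
    have hjr : (j i : ℝ) ≤ r := by exact_mod_cast (hj i).le
    have hfl := Int.floor_le (θ * r)
    have hlf := Int.lt_floor_add_one (θ * r)
    rw [← ht] at hfl hlf
    have hnr : (r:ℝ) ≤ n := by exact_mod_cast hpn
    have herr : |(j i : ℝ) * (β - p)| * r ≤ 1 := by
      rw [abs_mul, abs_of_nonneg (by positivity : (0:ℝ) ≤ (j i : ℝ))]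
      calc (j i : ℝ) * |β - p| * r ≤ r * (1 / (((n:ℝ) + 1) * r)) * r := by gcongr
        _ = r / (n + 1) := by field_simp
        _ ≤ 1 := by rw [div_le_one (by positivity)]; linarith
    set y := θ + (j i) * β - k i with hy
    have hyr : y * r = i + (θ * r - t) + (j i : ℝ) * (β - p) * r := by
      rw [hy]
      linear_combination hk' + (j i : ℝ) * hpr
    have he1 : (j i : ℝ) * (β - p) * r ≤ 1 :=
      le_trans (mul_le_mul_of_nonneg_right (le_abs_self _) hrpos.le) herr
    have he2 : -1 ≤ (j i : ℝ) * (β - p) * r := by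
      have := mul_le_mul_of_nonneg_right (neg_abs_le ((j i : ℝ) * (β - p))) hrpos.le
      linarith
    have hlow : (i:ℝ) - 1 ≤ y * r := by linarith
    have hup : y * r ≤ i + 2 := by linarith
    have hceil := Nat.le_ceil ((r:ℝ)/T)
    have hi0 : (r:ℝ)/T ≤ i - 1 := by
      have : ((⌈(r:ℝ)/T⌉₊:ℕ):ℝ) + 1 ≤ i := by exact_mod_cast hi.1
      linarith
    have hi2 : (i:ℝ) + 2 ≤ r / 2 := by
      have : 2 * (i + 2) ≤ r := by omega
      have : 2 * ((i:ℝ) + 2) ≤ r := by exact_mod_cast this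
      linarith
    have hTy : 1 / T ≤ y := by
      have : (1 / T) * r ≤ y * r := by
        have : (1/T) * r = r / T := by ring
        linarith
      exact le_of_mul_le_mul_right this hrpos
    have hypos : 0 < y := lt_of_lt_of_le (by positivity) hTy
    have hyhalf : y ≤ 1/2 := by
      refine le_of_mul_le_mul_right ?_ hrpos
      linarith
    have hd : dnint (θ + (j i) * β) = y := by
      have := aux_dnint_eq (k i) y hypos.le hyhalf
      rw [← this]
      congr 1
      rw [hy]; ring
    unfold auxg
    rw [hd, if_pos hTy]
    rw [mul_one_div, div_le_div_iff₀ (by positivity) hypos]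
    linarith
  have hsum1 : ∑ i ∈ Finset.Ico I0 J, auxg T (θ + (j i) * β)
      ≤ ∑ j ∈ Finset.range r, auxg T (θ + j * β) := by
    rw [← Finset.sum_image (f := fun x : ℕ => auxg T (θ + x * β)) hinj]
    apply Finset.sum_le_sum_of_subset_of_nonneg
    · intro x hx
      obtain ⟨i, _, rfl⟩ := Finset.mem_image.1 hx
      exact Finset.mem_range.2 (hj i)
    · intros; exact auxg_nonneg _ _
  have hsum2 : (r:ℝ) * ∑ i ∈ Finset.Ico I0 J, 1 / ((i:ℝ) + 2) ≤
      ∑ i ∈ Finset.Ico I0 J, auxg T (θ + (j i) * β) := by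
    rw [Finset.mul_sum]
    exact Finset.sum_le_sum hterm
  refine le_trans ?_ (hsum2.trans hsum1)
  refine mul_le_mul_of_nonneg_left ?_ hrpos.le
  have hJr : (r:ℝ) / 2 ≤ (J:ℝ) + 2 := by
    have : r ≤ 2 * (J + 2) := by omega
    have : (r:ℝ) ≤ 2 * ((J:ℝ) + 2) := by exact_mod_cast this
    linarith
  have hIr : (I0:ℝ) + 2 ≤ 2 * r / T := by
    have h1 := Nat.ceil_lt_add_one (show 0 ≤ (r:ℝ)/T by positivity)
    have h2 : 4 ≤ (r:ℝ)/T := by rw [le_div_iff₀ hTpos]; linarith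
    have h3 : (I0:ℝ) = (⌈(r:ℝ)/T⌉₊:ℝ) + 1 := by rw [hI0]; push_cast; ring
    have h4 : 2 * (r:ℝ) / T = 2 * (r / T) := by ring
    rw [h3, h4]; linarith
  have hlog : Real.log (T / 4) ≤ Real.log (((J:ℝ) + 2) / ((I0:ℝ) + 2)) := by
    apply Real.log_le_log (by positivity)
    rw [le_div_iff₀ (by positivity)]
    calc T / 4 * ((I0:ℝ) + 2) ≤ T / 4 * (2 * r / T) := by gcongr
      _ = r / 2 := by field_simp; ring
      _ ≤ _ := hJr
  refine hlog.trans ?_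
  rcases le_or_gt I0 J with h | h
  · exact aux_harm I0 J h
  · rw [Finset.Ico_eq_empty (by omega), Finset.sum_empty]
    apply Real.log_nonpos (by positivity)
    rw [div_le_one (by positivity)]
    have : (J:ℝ) ≤ I0 := by exact_mod_cast h.le
    linarith

lemma aux_blocks (F : ℕ → ℝ) (r : ℕ) (A : ℝ) (M : ℕ)
    (h : ∀ q0 : ℕ, A ≤ ∑ j ∈ Finset.range r, F (q0 + j)) (L : ℕ) :
    L * A ≤ ∑ q ∈ Finset.Ico M (M + L * r), F q := by
  induction L with
  | zero => simp
  | succ L ih =>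
    have h1 : M + (L+1) * r = M + L * r + r := by ring
    rw [h1, ← Finset.sum_Ico_consecutive F (show M ≤ M + L * r by omega)
      (show M + L * r ≤ M + L * r + r by omega)]
    have h2 := h (M + L * r)
    rw [Finset.sum_Ico_eq_sum_range F (M + L * r), Nat.add_sub_cancel_left]
    push_cast
    linarith

lemma aux_den (β : ℝ) (hβ : Irrational β)
    (hNL : ∃ τ > (0:ℝ), ∃ N : ℕ, ∀ q : ℕ, N ≤ q → (q : ℝ) ^ (-τ) ≤ dnint (q * β)) :
    ∀ᶠ m : ℕ in atTop, ∀ r : ℕ, 0 < r → dnint (r * β) ≤ 1 / ((2:ℝ) ^ m + 1) →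
      4 * (m:ℝ) ≤ r := by
  obtain ⟨τ, hτ, N, hN⟩ := hNL
  have hpow : Tendsto (fun m : ℕ => 1 / ((2:ℝ) ^ m + 1)) atTop (nhds 0) := by
    have h1 : Tendsto (fun m : ℕ => (2:ℝ) ^ m + 1) atTop atTop :=
      tendsto_atTop_add_const_right _ _ (tendsto_pow_atTop_atTop_of_one_lt (by norm_num))
    simp only [one_div]
    exact h1.inv_tendsto_atTop
  have hsmall : ∀ᶠ m : ℕ in atTop, ∀ r ∈ Finset.range N, 0 < r →
      1 / ((2:ℝ) ^ m + 1) < dnint (r * β) := by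
    rw [Filter.eventually_all_finset]
    intro r _
    by_cases hr : 0 < r
    · have hpos : 0 < dnint (r * β) := by
        unfold dnint
        rw [abs_pos, sub_ne_zero]
        exact (hβ.natCast_mul hr.ne').ne_int _
      filter_upwards [hpow.eventually_lt_const hpos] with m hm _
      exact hm
    · exact Eventually.of_forall fun m h => absurd h hr
  have hbig : ∀ᶠ m : ℕ in atTop, (4 * (m:ℝ)) ^ τ < (2:ℝ) ^ m := by
    have h1 := isLittleO_rpow_exp_pos_mul_atTop τ (Real.log_pos (by norm_num : (1:ℝ) < 2))
    have h2 := (h1.comp_tendsto tendsto_natCast_atTop_atTop).def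
      (show (0:ℝ) < 1 / (2 * (4:ℝ) ^ τ) by positivity)
    filter_upwards [h2] with m hm
    simp only [Function.comp_apply] at hm
    rw [Real.norm_of_nonneg (by positivity), Real.norm_of_nonneg (by positivity)] at hm
    have h3 : Real.exp (Real.log 2 * m) = (2:ℝ) ^ m := by
      rw [mul_comm, Real.exp_nat_mul, Real.exp_log (by norm_num)]
    rw [h3] at hm
    rw [Real.mul_rpow (by norm_num) (by positivity)]
    have h4 : (0:ℝ) < 4 ^ τ := by positivity
    have h5 : (0:ℝ) < 2 ^ m := by positivity
    calc (4:ℝ) ^ τ * (m:ℝ) ^ τ ≤ 4 ^ τ * (1 / (2 * (4:ℝ) ^ τ) * 2 ^ m) := by gcongr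
      _ = 2 ^ m / 2 := by field_simp
      _ < 2 ^ m := by linarith
  filter_upwards [hsmall, hbig] with m h1 h2 r hr hd
  by_contra! hlt
  rcases lt_or_ge r N with h | h
  · exact absurd (h1 r (Finset.mem_range.2 h) hr) (not_lt.2 hd)
  · have h3 := (hN r h).trans hd
    have hrpos : (0:ℝ) < r := by exact_mod_cast hr
    rw [Real.rpow_neg hrpos.le, inv_eq_one_div,
      one_div_le_one_div (by positivity) (by positivity)] at h3
    have h4 : (r:ℝ) ^ τ ≤ (4 * (m:ℝ)) ^ τ := Real.rpow_le_rpow hrpos.le hlt.le hτ.le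
    linarith

open Classical in
noncomputable def auxF (β γ₂ : ℝ) (q : ℕ) : ℝ :=
  if (Real.logb 2 q)⁻¹ ≤ dnint (q * β - γ₂) then
    (1 / ((q : ℝ) * Real.logb 2 q * (Real.logb 2 (Real.logb 2 q)) ^ 2))
          / dnint ((q : ℝ) * β - γ₂) else 0

lemma auxF_nonneg (β γ₂ : ℝ) (q : ℕ) (hq : 4 ≤ q) : 0 ≤ auxF β γ₂ q := by
  unfold auxF
  split_ifs
  · have h1 : (1:ℝ) ≤ q := by exact_mod_cast (by omega : 1 ≤ q)
    have h2 : 0 ≤ Real.logb 2 q := Real.logb_nonneg (by norm_num) h1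
    have := aux_dnint_nonneg ((q : ℝ) * β - γ₂)
    positivity
  · exact le_rfl

lemma auxF_lower (β γ₂ : ℝ) (m q : ℕ) (hm : 20 ≤ m) (h1 : 2 ^ m ≤ q) (h2 : q ≤ 2 ^ (m+1)) :
    (1 / ((2:ℝ) ^ (m+1) * (m+1) * (Real.logb 2 (m+1)) ^ 2)) * auxg m ((q:ℕ) * β - γ₂)
      ≤ auxF β γ₂ q := by
  have hm' : (20:ℝ) ≤ m := by exact_mod_cast hm
  have h1' : (2:ℝ) ^ m ≤ q := by exact_mod_cast h1
  have h2' : (q:ℝ) ≤ 2 ^ (m+1) := by exact_mod_cast h2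
  have hq : (0:ℝ) < q := lt_of_lt_of_le (by positivity) h1'
  have hl1 : (m:ℝ) ≤ Real.logb 2 q := by
    rw [Real.le_logb_iff_rpow_le (by norm_num) hq]
    simpa using h1'
  have hl2 : Real.logb 2 q ≤ m + 1 := by
    rw [Real.logb_le_iff_le_rpow (by norm_num) hq]
    have : ((m:ℝ) + 1) = ((m+1 : ℕ) : ℝ) := by push_cast; ring
    rw [this, Real.rpow_natCast]
    exact h2'
  have hl0 : 0 < Real.logb 2 q := by linarith
  have hll0 : 0 < Real.logb 2 (Real.logb 2 q) := Real.logb_pos (by norm_num) (by linarith)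
  have hll : Real.logb 2 (Real.logb 2 q) ≤ Real.logb 2 (m+1) :=
    Real.logb_le_logb_of_le (by norm_num) hl0 hl2
  unfold auxg
  split_ifs with h
  · unfold auxF
    have hmpos : (0:ℝ) < 1 / m := by positivity
    rw [if_pos]
    · rw [div_eq_mul_one_div (_ / _) (dnint _)]
      have hd : 0 ≤ 1 / dnint ((q : ℝ) * β - γ₂) :=
        div_nonneg zero_le_one (aux_dnint_nonneg _)
      gcongr
    · refine le_trans ?_ h
      rw [inv_eq_one_div]
      gcongr
  · rw [mul_zero]
    refine auxF_nonneg _ _ _ (le_trans ?_ h1)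
    calc 4 = 2 ^ 2 := by norm_num
      _ ≤ 2 ^ m := Nat.pow_le_pow_right (by norm_num) (by omega)

lemma aux_analysis (m : ℕ) (hm : 20 ≤ m) :
    (Real.log 2 ^ 2 / 8) * (Real.log (Real.log (m+2)) - Real.log (Real.log (m+1))) ≤
    (1 / ((2:ℝ) ^ (m+1) * (m+1) * (Real.logb 2 (m+1)) ^ 2)) *
      ((2:ℝ)^m / 2 * Real.log (m/4)) := by
  have hm' : (20:ℝ) ≤ m := by exact_mod_cast hm
  set l := Real.log ((m:ℝ)+1) with hl
  have hlpos : 0 < l := Real.log_pos (by linarith)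
  have hl2 : 0 < Real.log ((m:ℝ)+2) := Real.log_pos (by linarith)
  have hlog2 : 0 < Real.log 2 := Real.log_pos (by norm_num)
  have hA : Real.log (Real.log (m+2)) - Real.log l ≤ 1 / ((m+1) * l) := by
    rw [← Real.log_div hl2.ne' hlpos.ne']
    refine (Real.log_le_sub_one_of_pos (by positivity)).trans ?_
    have h1 : Real.log ((m:ℝ)+2) - l ≤ 1 / (m+1) := by
      rw [hl, ← Real.log_div (by positivity) (by positivity)]
      refine (Real.log_le_sub_one_of_pos (by positivity)).trans (le_of_eq ?_)
      field_simp
      ring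
    have h2 : Real.log ((m:ℝ)+2) / l - 1 = (Real.log ((m:ℝ)+2) - l) / l := by
      field_simp
    rw [h2, ← div_div]
    gcongr
  have hB : l / 2 ≤ Real.log (m/4) := by
    have : l ≤ Real.log (((m:ℝ)/4)^2) := by
      apply Real.log_le_log (by positivity)
      nlinarith
    rw [Real.log_pow] at this
    push_cast at this
    linarith
  have hC : Real.logb 2 ((m:ℝ)+1) = l / Real.log 2 := rfl
  rw [hC]
  calc _ ≤ (Real.log 2 ^ 2 / 8) * (1 / ((m+1) * l)) := by gcongr
    _ = (1 / ((2:ℝ) ^ (m+1) * (m+1) * (l / Real.log 2) ^ 2)) * ((2:ℝ)^m / 2 * (l/2)) := by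
      rw [pow_succ]
      field_simp
      ring
    _ ≤ _ := by gcongr

lemma aux_block (β : ℝ) (hβ : Irrational β)
    (hNL : ∃ τ > (0:ℝ), ∃ N : ℕ, ∀ q : ℕ, N ≤ q → (q : ℝ) ^ (-τ) ≤ dnint (q * β))
    (γ₂ : ℝ) : ∀ᶠ m : ℕ in atTop,
    (Real.log 2 ^ 2 / 8) * (Real.log (Real.log (m+2)) - Real.log (Real.log (m+1))) ≤
      ∑ q ∈ Finset.Ico (2^m) (2^(m+1)), auxF β γ₂ q := by
  filter_upwards [aux_den β hβ hNL, eventually_ge_atTop 20] with m hden hm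
  have hm' : (20:ℝ) ≤ m := by exact_mod_cast hm
  obtain ⟨p, hp, hpn⟩ := Real.exists_rat_abs_sub_le_and_den_le β (n := 2^m) (by positivity)
  have hr0 : (0:ℝ) < p.den := by exact_mod_cast p.den_pos
  have hr : 4 * (m:ℝ) ≤ p.den := by
    apply hden _ p.den_pos
    refine (aux_dnint_le _ p.num).trans ?_
    have hpr : (p:ℝ) * p.den = p.num := by exact_mod_cast Rat.mul_den_eq_num p
    rw [← hpr]
    have : (p.den:ℝ) * β - p * p.den = p.den * (β - p) := by ring
    rw [this, abs_mul, abs_of_pos hr0]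
    calc (p.den:ℝ) * |β - p| ≤ p.den * (1 / ((((2^m:ℕ):ℝ) + 1) * p.den)) := by gcongr
      _ = _ := by push_cast; field_simp
  set A := (p.den:ℝ) * Real.log (m/4) with hA
  have hApos : 0 ≤ Real.log ((m:ℝ)/4) := Real.log_nonneg (by linarith)
  set L := 2^m / p.den with hL
  have hblk := aux_blocks (fun q => auxg m ((q:ℕ) * β - γ₂)) p.den A (2^m) (by
    intro q0
    refine (aux_key β (q0 * β - γ₂) m p (2^m) hp hpn (by linarith) hr).trans (le_of_eq ?_)
    refine Finset.sum_congr rfl fun j _ => ?_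
    congr 1
    push_cast
    ring) L
  have hLr : L * p.den ≤ 2^m := Nat.div_mul_le_self _ _
  have hLr2 : (2:ℝ)^m / 2 ≤ L * p.den := by
    have h1 : 2^m < (L + 1) * p.den := by
      have := Nat.lt_div_mul_add (a := 2^m) p.den_pos
      rw [← hL] at this
      linarith
    have h3 : 1 ≤ L := (Nat.one_le_div_iff p.den_pos).2 hpn
    have h4 : 2^m ≤ 2 * (L * p.den) := by nlinarith [p.den_pos]
    have : (2:ℝ)^m ≤ 2 * (L * p.den) := by exact_mod_cast h4
    linarith
  set ψ := (1 / ((2:ℝ) ^ (m+1) * (m+1) * (Real.logb 2 (m+1)) ^ 2)) with hψ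
  have hψ0 : 0 ≤ ψ := by positivity
  have hsub : Finset.Ico (2^m) (2^m + L * p.den) ⊆ Finset.Ico (2^m) (2^(m+1)) := by
    apply Finset.Ico_subset_Ico_right
    rw [pow_succ]; omega
  calc _ ≤ ψ * ((2:ℝ)^m / 2 * Real.log (m/4)) := aux_analysis m hm
    _ ≤ ψ * (L * A) := by
      rw [hA, ← mul_assoc (L:ℝ)]
      gcongr
    _ ≤ ψ * ∑ q ∈ Finset.Ico (2^m) (2^m + L * p.den), auxg m ((q:ℕ) * β - γ₂) := by gcongr
    _ ≤ ψ * ∑ q ∈ Finset.Ico ((2:ℕ)^m) ((2:ℕ)^(m+1)), auxg m ((q:ℕ) * β - γ₂) := by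
      refine mul_le_mul_of_nonneg_left ?_ hψ0
      exact Finset.sum_le_sum_of_subset_of_nonneg hsub fun _ _ _ => auxg_nonneg _ _
    _ ≤ _ := by
      rw [Finset.mul_sum]
      refine Finset.sum_le_sum fun q hq => ?_
      rw [Finset.mem_Ico] at hq
      exact auxF_lower β γ₂ m q hm hq.1 hq.2.le

open Classical in
theorem stmt18 (β : ℝ) (hβ : Irrational β)
    (hNL : ∃ τ > (0:ℝ), ∃ N : ℕ, ∀ q : ℕ, N ≤ q → (q : ℝ) ^ (-τ) ≤ dnint (q * β))
    (γ₂ : ℝ) :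
    Tendsto (fun Q : ℕ => ∑ q ∈ (Finset.Icc 4 Q).filter
        (fun q : ℕ => (Real.logb 2 q)⁻¹ ≤ dnint (q * β - γ₂)),
        (1 / ((q : ℝ) * Real.logb 2 q * (Real.logb 2 (Real.logb 2 q)) ^ 2))
          / dnint ((q : ℝ) * β - γ₂))
      atTop atTop := by
  have heq : (fun Q : ℕ => ∑ q ∈ (Finset.Icc 4 Q).filter
        (fun q : ℕ => (Real.logb 2 q)⁻¹ ≤ dnint (q * β - γ₂)),
        (1 / ((q : ℝ) * Real.logb 2 q * (Real.logb 2 (Real.logb 2 q)) ^ 2))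
          / dnint ((q : ℝ) * β - γ₂)) = fun Q : ℕ => ∑ q ∈ Finset.Icc 4 Q, auxF β γ₂ q := by
    funext Q
    rw [Finset.sum_filter]
    rfl
  rw [heq]
  apply tendsto_atTop_atTop_of_monotone
  · intro a b hab
    apply Finset.sum_le_sum_of_subset_of_nonneg (Finset.Icc_subset_Icc_right hab)
    intro q hq _
    exact auxF_nonneg _ _ _ (Finset.mem_Icc.1 hq).1
  · intro b
    obtain ⟨m0, hm0⟩ := eventually_atTop.1
      ((aux_block β hβ hNL γ₂).and (eventually_ge_atTop 2))
    set c := Real.log 2 ^ 2 / 8 with hc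
    have hlog2 : 0 < Real.log 2 := Real.log_pos (by norm_num)
    have hcpos : 0 < c := by positivity
    have hsum : ∀ m, m0 ≤ m → c * (Real.log (Real.log (m+1)) - Real.log (Real.log (m0+1)))
        ≤ ∑ q ∈ Finset.Ico (2^m0) (2^m), auxF β γ₂ q := by
      intro m hm
      induction m, hm using Nat.le_induction with
      | base => simp
      | succ m hm ih =>
        rw [← Finset.sum_Ico_consecutive _ (Nat.pow_le_pow_right (by norm_num) hm)
          (Nat.pow_le_pow_right (by norm_num) (Nat.le_succ m))]
        have h1 := (hm0 m hm).1
        have h2 : (((m+1:ℕ):ℝ) + 1) = (m:ℝ) + 2 := by push_cast; ring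
        rw [h2]
        have h3 := add_le_add ih h1
        refine le_trans (le_of_eq ?_) h3
        ring
    have htend : Tendsto (fun m : ℕ =>
        c * (Real.log (Real.log ((m:ℝ)+1)) - Real.log (Real.log (m0+1)))) atTop atTop := by
      apply Tendsto.const_mul_atTop hcpos
      apply tendsto_atTop_add_const_right
      exact Real.tendsto_log_atTop.comp (Real.tendsto_log_atTop.comp
        (tendsto_atTop_add_const_right _ _ tendsto_natCast_atTop_atTop))
    obtain ⟨m, hb, hm⟩ := ((htend.eventually_ge_atTop b).and (eventually_ge_atTop m0)).exists
    refine ⟨2^m, (hb.trans (hsum m hm)).trans ?_⟩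
    have h4 : 4 ≤ 2^m0 := by
      calc 4 = 2 ^ 2 := by norm_num
        _ ≤ 2 ^ m0 := Nat.pow_le_pow_right (by norm_num) (hm0 m0 le_rfl).2
    apply Finset.sum_le_sum_of_subset_of_nonneg
    · intro q hq
      rw [Finset.mem_Ico] at hq
      rw [Finset.mem_Icc]
      omega
    · intro q hq _
      exact auxF_nonneg _ _ _ (Finset.mem_Icc.1 hq).1
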